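/- Let p be a prime, f ≥ 1 an integer, q = p^f, and let K = F_q((t)) be the field of formal Laurent series over the field F_q with q elements. Fix a separable closure Ω of K. For an integer n ≥ 1 set e_n = p^n − 1, let K_n = K(ζ) where ζ ∈ Ω is a primitive e_n-th root of unity, let L_n ⊆ Ω be the field generated over K_n by all x ∈ Ω with x^{e_n} ∈ K_n, and let G_n = Gal(L_n / K). Let ℘ : L_n → L_n be the additive map ℘(x) = x^p − x. Then there is an isomorphism of F_p[G_n]-modules between the quotient L_n / ℘(L_n) of the additive group of L_n (with the G_n-action induced by the Galois action) and the direct sum F_p ⊕ F_p[G_n]^{(ℕ)}, where G_n acts trivially on F_p and F_p[G_n]^{(ℕ)} is a countable direct sum of copies of the group algebra F_p[G_n] with G_n acting by left multiplication. -/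

import Mathlib

open HahnSeries

noncomputable section

/-- The series `∑ a_i t^i ↦ ∑ φ(a_i) ω^i t^i`. -/
def lauTwist {A B : Type} [Field A] [Field B] (φ : A →+* B) (ω : Bˣ) :
    LaurentSeries A →+* LaurentSeries B where
  toFun x := ⟨fun i => φ (x.coeff i) * ((ω ^ i : Bˣ) : B), x.isPWO_support.mono (by
    intro i hi h
    apply hi
    simp [h])⟩
  map_one' := by
    ext i
    by_cases h : i = 0
    · subst h; simp
    · simp [HahnSeries.coeff_one, h]
  map_zero' := by ext i; simp
  map_add' x y := by ext i; simp [add_mul]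
  map_mul' x y := by
    ext i
    simp only [HahnSeries.coeff_mul, map_sum, map_mul, Finset.sum_mul]
    refine Eq.symm (Finset.sum_subset_zero_on_sdiff ?_ ?_ ?_)
    · intro gh hgh
      simp_all only [Finset.mem_antidiagonal, mem_support, ne_eq, and_true]
      exact ⟨fun h => hgh.1 (by simp [h]), fun h => hgh.2.1 (by simp [h])⟩
    · intro gh hgh
      simp only [Finset.mem_sdiff, Finset.mem_antidiagonal, mem_support, ne_eq] at hgh
      exact absurd ⟨mul_ne_zero (by simpa using hgh.1.1) (Units.ne_zero _),
        mul_ne_zero (by simpa using hgh.1.2.1) (Units.ne_zero _), hgh.1.2.2⟩ hgh.2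
    · intro gh hgh
      simp only [Finset.mem_antidiagonal] at hgh
      rw [← hgh.2.2, zpow_add]
      push_cast
      ring

theorem lauTwist_coeff {A B : Type} [Field A] [Field B] (φ : A →+* B) (ω : Bˣ)
    (x : LaurentSeries A) (i : ℤ) :
    (lauTwist φ ω x).coeff i = φ (x.coeff i) * ((ω ^ i : Bˣ) : B) := rfl

def lauExp {A B : Type} [Field A] [Field B] (φ : A →+* B) (e : ℕ) (he : 0 < e) :
    LaurentSeries A →+* LaurentSeries B :=
  (HahnSeries.embDomainRingHom (AddMonoidHom.mulLeft (e : ℤ))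
    (fun a b h => by
      have : (e : ℤ) ≠ 0 := by positivity
      simpa [he.ne'] using h)
    (fun a b => by
      have : (0 : ℤ) < e := by positivity
      exact mul_le_mul_iff_right₀ this)).comp (lauTwist φ 1)

theorem lauExp_coeff_mul {A B : Type} [Field A] [Field B] (φ : A →+* B) (e : ℕ) (he : 0 < e)
    (x : LaurentSeries A) (i : ℤ) :
    (lauExp φ e he x).coeff (e * i) = φ (x.coeff i) := by
  have h := HahnSeries.embDomain_coeff (x := lauTwist φ 1 x) (a := i)
    (f := ⟨⟨AddMonoidHom.mulLeft (e : ℤ), fun a b h => by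
      have : (e : ℤ) ≠ 0 := by positivity
      simpa [he.ne'] using h⟩, fun {a b} => by
      have : (0 : ℤ) < e := by positivity
      exact mul_le_mul_iff_right₀ this⟩)
  refine Eq.trans h ?_
  simp [lauTwist_coeff]

theorem lauExp_coeff_of_not_dvd {A B : Type} [Field A] [Field B] (φ : A →+* B) (e : ℕ) (he : 0 < e)
    (x : LaurentSeries A) (i : ℤ) (hi : ¬ (e : ℤ) ∣ i) :
    (lauExp φ e he x).coeff i = 0 := by
  apply HahnSeries.embDomain_of_notMem_range 
  rintro ⟨j, rfl⟩
  exact hi ⟨j, rfl⟩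

theorem lauExp_single {A B : Type} [Field A] [Field B] (φ : A →+* B) (e : ℕ) (he : 0 < e)
    (a : A) (i : ℤ) :
    lauExp φ e he (single i a) = single (e * i) (φ a) := by
  ext j
  by_cases hj : (e : ℤ) ∣ j
  · obtain ⟨j, rfl⟩ := hj
    have : (e : ℤ) ≠ 0 := by positivity
    rw [lauExp_coeff_mul]
    by_cases h : j = i
    · subst h; simp
    · rw [coeff_single_of_ne h, coeff_single_of_ne (by simpa [he.ne'] using h), map_zero]
  · rw [lauExp_coeff_of_not_dvd _ _ _ _ _ hj, coeff_single_of_ne]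
    rintro rfl
    exact hj ⟨_, rfl⟩

theorem lauTwist_single {A B : Type} [Field A] [Field B] (φ : A →+* B) (ω : Bˣ)
    (a : A) (i : ℤ) :
    lauTwist φ ω (single i a) = single i (φ a * ((ω ^ i : Bˣ) : B)) := by
  ext j
  rw [lauTwist_coeff]
  by_cases h : j = i
  · subst h; simp
  · rw [coeff_single_of_ne h, coeff_single_of_ne h]; simp

/-- Frobenius on Laurent series. -/
theorem lau_pow_p {F : Type} [Field F] (p : ℕ) [hp : Fact p.Prime] [CharP F p]
    (y : LaurentSeries F) : y ^ p = lauExp (frobenius F p) p hp.out.pos y := by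
  have key : ∀ z : PowerSeries F, (ofPowerSeries ℤ F z) ^ p =
      lauExp (frobenius F p) p hp.out.pos (ofPowerSeries ℤ F z) := by
    intro z
    rw [← map_pow]
    have h := MvPowerSeries.map_frobenius_expand p hp.out.ne_zero (f := z) 
    have h' : (PowerSeries.map (frobenius F p) (PowerSeries.expand p hp.out.ne_zero z)) = z ^ p := h
    rw [← h']
    ext i
    by_cases hi : (p : ℤ) ∣ i
    · obtain ⟨i, rfl⟩ := hi
      rw [lauExp_coeff_mul, PowerSeries.coeff_coe, PowerSeries.coeff_coe]
      have hp0 : (0 : ℤ) < p := by exact_mod_cast hp.out.pos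
      rcases lt_or_ge i 0 with h0 | h0
      · rw [if_pos h0, if_pos (by nlinarith), map_zero]
      · rw [if_neg (not_lt.2 h0), if_neg (by nlinarith)]
        lift i to ℕ using h0
        rw [show ((p : ℤ) * (i : ℤ)).natAbs = p * i by rw [← Nat.cast_mul]; rfl]
        simp
    · rw [lauExp_coeff_of_not_dvd _ _ _ _ _ hi, PowerSeries.coeff_coe]
      split_ifs with h0
      · rfl
      · push Not at h0
        lift i to ℕ using h0
        rw [PowerSeries.coeff_map, Int.natAbs_natCast, PowerSeries.coeff_expand_of_not_dvd, map_zero]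
        exact fun h => hi (by exact_mod_cast h)
  rw [← LaurentSeries.single_order_mul_powerSeriesPart y, mul_pow, key, map_mul, lauExp_single,
    HahnSeries.single_pow]
  simp

theorem lau_pow_coeff_mul {F : Type} [Field F] (p : ℕ) [hp : Fact p.Prime] [CharP F p]
    (y : LaurentSeries F) (i : ℤ) : (y ^ p).coeff (p * i) = y.coeff i ^ p := by
  rw [lau_pow_p, lauExp_coeff_mul, frobenius_def]

theorem lau_pow_coeff_not_dvd {F : Type} [Field F] (p : ℕ) [hp : Fact p.Prime] [CharP F p]
    (y : LaurentSeries F) (i : ℤ) (h : ¬ (p : ℤ) ∣ i): (y ^ p).coeff i = 0 := by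
  rw [lau_pow_p, lauExp_coeff_of_not_dvd _ _ _ _ _ h]

/-- A power series without constant term is of the form `y ^ p - y`. -/
theorem ps_wp {F : Type} [Field F] (p : ℕ) [hp : Fact p.Prime] [CharP F p]
    (x : PowerSeries F) (hx : PowerSeries.constantCoeff x = 0) :
    ∃ y : PowerSeries F, y ^ p - y = x := by
  have hH : HenselianRing (PowerSeries F) (Ideal.span {PowerSeries.X}) := inferInstance
  have hchar : CharP (PowerSeries F) p := charP_of_injective_algebraMap
    (algebraMap F (PowerSeries F)).injective p
  obtain ⟨y, hy, -⟩ := hH.is_henselian (Polynomial.X ^ p - Polynomial.X - Polynomial.C x) (by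
      rw [sub_sub]
      apply Polynomial.monic_X_pow_sub
      rw [Polynomial.degree_X_add_C]
      exact_mod_cast hp.out.one_lt) 0 (by
      simp [hp.out.ne_zero, Ideal.mem_span_singleton, PowerSeries.X_dvd_iff, hx]) (by
      rw [Polynomial.derivative_sub, Polynomial.derivative_sub, Polynomial.derivative_X_pow]
      simp)
  refine ⟨y, ?_⟩
  have := hy
  simp only [Polynomial.IsRoot, Polynomial.eval_sub, Polynomial.eval_pow, Polynomial.eval_X,
    Polynomial.eval_C] at this
  exact sub_eq_zero.1 this

/-- A power series with constant term one is an `e`-th power, if `e` is prime to `p`. -/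
theorem ps_root {F : Type} [Field F] (e : ℕ) (he : (e : F) ≠ 0)
    (x : PowerSeries F) (hx : PowerSeries.constantCoeff x = 1) :
    ∃ y : PowerSeries F, y ^ e = x := by
  have hH : HenselianRing (PowerSeries F) (Ideal.span {PowerSeries.X}) := inferInstance
  have he0 : e ≠ 0 := by rintro rfl; simp at he
  obtain ⟨y, hy, -⟩ := hH.is_henselian (Polynomial.X ^ e - Polynomial.C x) 
      (Polynomial.monic_X_pow_sub_C _ he0) 1 (by
      simp [Ideal.mem_span_singleton, PowerSeries.X_dvd_iff, hx]) (by
      simp only [Polynomial.derivative_sub, Polynomial.derivative_C, Polynomial.derivative_X_pow]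
      simp
      have : IsUnit (algebraMap F (PowerSeries F) e) := (IsUnit.mk0 _ he).map _
      have := this.map (Ideal.Quotient.mk (Ideal.span {(PowerSeries.X : PowerSeries F)}))
      simpa using this)
  refine ⟨y, ?_⟩
  have := hy
  simp only [Polynomial.IsRoot, Polynomial.eval_sub, Polynomial.eval_pow, Polynomial.eval_X,
    Polynomial.eval_C] at this
  exact sub_eq_zero.1 this

end

noncomputable section

theorem lau_gen {k F : Type} [Field k] [Field F] [Algebra k F] [FiniteDimensional k F]
    (e : ℕ) (he : 0 < e) (S : Subring (LaurentSeries F))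
    (h1 : ∀ y, lauExp (algebraMap k F) e he y ∈ S) (h2 : ∀ a : F, single (0 : ℤ) a ∈ S)
    (h3 : single (1 : ℤ) (1 : F) ∈ S) (x : LaurentSeries F) : x ∈ S := by
  classical
  let B := Module.finBasis k F
  have hbdd : ∀ (j : ℕ) (b : Fin (Module.finrank k F)), BddBelow (Function.support
      (fun i : ℤ => B.repr (x.coeff (e * i + j)) b)) := by
    intro j b
    refine ⟨-|x.order| - j, ?_⟩
    intro i hi
    by_contra hlt
    push Not at hlt
    apply hi
    have h : x.coeff (e * i + j) = 0 := by
      apply HahnSeries.coeff_eq_zero_of_lt_order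
      have h4 := abs_nonneg x.order
      have h5 := neg_abs_le x.order
      have h6 : (1 : ℤ) ≤ e := by exact_mod_cast he
      nlinarith
    simp [h]
  have hx : x = ∑ j ∈ Finset.range e, ∑ b, lauExp (algebraMap k F) e he
      (HahnSeries.ofSuppBddBelow _ (hbdd j b)) * single (j : ℤ) (B b) := by
    ext i
    have he' : (0 : ℤ) < e := by exact_mod_cast he
    obtain ⟨q, r, hr, rfl⟩ : ∃ (q : ℤ) (r : ℕ), r < e ∧ i = e * q + r := by
      refine ⟨i / e, (i % e).toNat, ?_, ?_⟩
      · have := Int.emod_lt_of_pos i he'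
        have := Int.emod_nonneg i he'.ne'
        omega
      · have := Int.emod_nonneg i he'.ne'
        have := Int.mul_ediv_add_emod i e
        omega
    rw [HahnSeries.coeff_sum, Finset.sum_eq_single r]
    · rw [HahnSeries.coeff_sum]
      simp only [HahnSeries.coeff_mul_single, add_sub_cancel_right, lauExp_coeff_mul]
      simp only [coeff_ofSuppBddBelow, ← Algebra.smul_def]
      exact (B.sum_repr _).symm
    · intro j hj hne
      rw [HahnSeries.coeff_sum]
      apply Finset.sum_eq_zero
      intro b _
      rw [HahnSeries.coeff_mul_single, lauExp_coeff_of_not_dvd, zero_mul]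
      rintro ⟨c, hc⟩
      have hj' := Finset.mem_range.1 hj
      have : (r : ℤ) - j = e * (c - q) := by linarith
      have h7 : (e : ℤ) ∣ (r : ℤ) - j := ⟨_, this⟩
      have := Int.eq_zero_of_abs_lt_dvd h7 (by rw [abs_lt]; constructor <;> omega)
      omega
    · intro h
      exact absurd (Finset.mem_range.2 hr) h
  rw [hx]
  refine S.sum_mem fun j _ => S.sum_mem fun b _ => S.mul_mem (h1 _) ?_
  have : single (j : ℤ) (B b) = single (0 : ℤ) (B b) * single (1 : ℤ) (1 : F) ^ j := by
    simp [HahnSeries.single_pow]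
  rw [this]
  exact S.mul_mem (h2 _) (S.pow_mem h3 _)

theorem fin_trace {F : Type} [Field F] [Finite F] (p : ℕ) [hp : Fact p.Prime] [Algebra (ZMod p) F]
    (a : F) : Algebra.trace (ZMod p) F a = 0 ↔ ∃ b : F, b ^ p - b = a := by
  have hchar : CharP F p := charP_of_injective_algebraMap (algebraMap (ZMod p) F).injective p
  let P : F →ₗ[ZMod p] F := (FiniteField.frobeniusAlgHom (ZMod p) F).toLinearMap - LinearMap.id
  have hP : ∀ b, P b = b ^ p - b := by intro b; simp [P, FiniteField.frobeniusAlgHom]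
  have hle : LinearMap.range P ≤ LinearMap.ker (Algebra.trace (ZMod p) F) := by
    rintro _ ⟨b, rfl⟩
    rw [LinearMap.mem_ker, hP, map_sub, sub_eq_zero]
    have := Algebra.trace_eq_of_algEquiv (FiniteField.frobeniusAlgEquiv (ZMod p) F p) b
    simpa using this
  have hker : Module.finrank (ZMod p) (LinearMap.ker P) ≤ 1 := by
    apply finrank_le_one (⟨1, by simp [hP]⟩ : LinearMap.ker P)
    rintro ⟨w, hw⟩
    rw [LinearMap.mem_ker, hP, sub_eq_zero] at hw
    rw [← Subfield.mem_bot_iff_pow_eq_self F p, mem_bot_iff_intCast p] at hw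
    obtain ⟨c, hc⟩ := hw
    refine ⟨(c : ZMod p), ?_⟩
    ext
    simp [Algebra.smul_def, hc]
  have h1 := LinearMap.finrank_range_add_finrank_ker P
  have h2 := LinearMap.finrank_range_add_finrank_ker (Algebra.trace (ZMod p) F)
  rw [LinearMap.range_eq_top.2 (Algebra.trace_surjective _ _), finrank_top,
    Module.finrank_self] at h2
  have heq := Submodule.eq_of_le_of_finrank_le hle (by omega)
  rw [← LinearMap.mem_ker, ← heq]
  simp [hP]

end

noncomputable section

/-- representatives of `E / ℘ E` -/
def psi {F : Type} [Field F] (p : ℕ) [Algebra (ZMod p) F] (β : F) :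
    (ZMod p × ({m : ℕ // ¬ p ∣ m} →₀ F)) →+ LaurentSeries F :=
  AddMonoidHom.coprod
    ((HahnSeries.single.addMonoidHom (0 : ℤ)).comp (LinearMap.toSpanSingleton (ZMod p) F β).toAddMonoidHom)
    (Finsupp.liftAddHom (fun m => HahnSeries.single.addMonoidHom (-(m.1 : ℤ))))

theorem psi_apply {F : Type} [Field F] (p : ℕ) [Algebra (ZMod p) F] (β : F)
    (c : ZMod p) (a : {m : ℕ // ¬ p ∣ m} →₀ F) :
    psi p β (c, a) = single 0 (c • β) + a.sum (fun m b => single (-(m.1 : ℤ)) b) := by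
  simp [psi]
  rfl

theorem psi_coeff {F : Type} [Field F] (p : ℕ) [Algebra (ZMod p) F] (β : F)
    (c : ZMod p) (a : {m : ℕ // ¬ p ∣ m} →₀ F) (i : ℤ) :
    (psi p β (c, a)).coeff i = (single (0 : ℤ) (c • β)).coeff i +
      a.sum (fun m b => (single (-(m.1 : ℤ)) b).coeff i) := by
  rw [psi_apply, HahnSeries.coeff_add]
  congr 1
  exact map_finsuppSum (HahnSeries.coeff.addMonoidHom i) a _

theorem psi_coeff_neg {F : Type} [Field F] (p : ℕ) [Algebra (ZMod p) F] (β : F)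
    (c : ZMod p) (a : {m : ℕ // ¬ p ∣ m} →₀ F) (m : {m : ℕ // ¬ p ∣ m}) :
    (psi p β (c, a)).coeff (-(m.1 : ℤ)) = a m := by
  classical
  have hm : m.1 ≠ 0 := fun h => m.2 (h ▸ dvd_zero p)
  rw [psi_coeff, coeff_single_of_ne (by omega), zero_add, Finsupp.sum]
  rw [Finset.sum_eq_single m]
  · simp
  · intro b _ hb
    rw [coeff_single_of_ne]
    intro h
    apply hb
    ext
    omega
  · intro h
    simpa using h

theorem psi_coeff_dvd {F : Type} [Field F] (p : ℕ) [Algebra (ZMod p) F] (β : F)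
    (c : ZMod p) (a : {m : ℕ // ¬ p ∣ m} →₀ F) (j : ℤ) (hj : (p : ℤ) ∣ j) :
    (psi p β (c, a)).coeff j = if j = 0 then c • β else 0 := by
  rw [psi_coeff, Finsupp.sum, Finset.sum_eq_zero, add_zero]
  · split_ifs with h
    · subst h; simp
    · rw [coeff_single_of_ne h]
  · intro m _
    rw [coeff_single_of_ne]
    rintro rfl
    apply m.2
    rw [dvd_neg] at hj
    exact_mod_cast hj

theorem psi_inj {F : Type} [Field F] [Finite F] (p : ℕ) [hp : Fact p.Prime] [Algebra (ZMod p) F]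
    (β : F) (hβ : Algebra.trace (ZMod p) F β = 1) (c : ZMod p) (a : {m : ℕ // ¬ p ∣ m} →₀ F)
    (y : LaurentSeries F) (h : psi p β (c, a) = y ^ p - y) : c = 0 ∧ a = 0 := by
  have hchar : CharP F p := charP_of_injective_algebraMap (algebraMap (ZMod p) F).injective p
  have hp0 : (0 : ℤ) < p := by exact_mod_cast hp.out.pos
  have hy : ∀ (i : ℤ), i < 0 → y.coeff (p * i) = y.coeff i ^ p := by
    intro i hi
    have := congrArg (fun z => HahnSeries.coeff z (p * i)) h
    simp only [HahnSeries.coeff_sub, lau_pow_coeff_mul] at this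
    rw [psi_coeff_dvd _ _ _ _ _ (Dvd.intro _ rfl), if_neg (by nlinarith)] at this
    exact (sub_eq_zero.1 this.symm).symm
  have hy' : ∀ (n : ℕ) (i : ℤ), i < 0 → y.coeff i ≠ 0 → y.coeff (p ^ n * i) ≠ 0 := by
    intro n
    induction n with
    | zero => intro i hi h; simpa using h
    | succ n ih =>
      intro i hi h
      have := ih i hi h
      rw [pow_succ', mul_assoc, hy _ (by
        have : (0 : ℤ) < p ^ n := by positivity
        nlinarith)]
      exact pow_ne_zero _ this
  have hy0 : ∀ i : ℤ, i < 0 → y.coeff i = 0 := by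
    intro i hi
    by_contra hne
    apply hy' (y.order.natAbs + 1) i hi hne
    apply HahnSeries.coeff_eq_zero_of_lt_order
    have h1 : (y.order.natAbs + 1 : ℤ) < p ^ (y.order.natAbs + 1) := by
      exact_mod_cast Nat.lt_pow_self hp.out.one_lt
    have : (p : ℤ) ^ (y.order.natAbs + 1) * i ≤ - (p : ℤ) ^ (y.order.natAbs + 1) := by nlinarith
    omega
  constructor
  · have h0 := congrArg (fun z => HahnSeries.coeff z ((p : ℤ) * 0)) h
    simp only [HahnSeries.coeff_sub, lau_pow_coeff_mul] at h0
    rw [psi_coeff_dvd _ _ _ _ _ (Dvd.intro _ rfl), if_pos (by simp), mul_zero] at h0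
    have := (fin_trace p (c • β)).2 ⟨_, h0.symm⟩
    simpa [hβ] using this
  · ext m
    have hm : m.1 ≠ 0 := fun h => m.2 (h ▸ dvd_zero p)
    rw [← psi_coeff_neg p β c a m, h, HahnSeries.coeff_sub, lau_pow_coeff_not_dvd, hy0]
    · simp
    · omega
    · intro h
      rw [dvd_neg] at h
      exact m.2 (by exact_mod_cast h)

theorem psi_surj {F : Type} [Field F] [Finite F] (p : ℕ) [hp : Fact p.Prime] [Algebra (ZMod p) F]
    (β : F) (hβ : Algebra.trace (ZMod p) F β = 1) (x : LaurentSeries F) :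
    ∃ (z : ZMod p × ({m : ℕ // ¬ p ∣ m} →₀ F)) (y : LaurentSeries F), x = psi p β z + (y ^ p - y) := by
  have hchar : CharP F p := charP_of_injective_algebraMap (algebraMap (ZMod p) F).injective p
  have hchar' : CharP (LaurentSeries F) p := charP_of_injective_algebraMap
    (algebraMap F (LaurentSeries F)).injective p
  have hadd : ∀ x₁ x₂ : LaurentSeries F,
      (∃ (z : _) (y : LaurentSeries F), x₁ = psi p β z + (y ^ p - y)) →
      (∃ (z : _) (y : LaurentSeries F), x₂ = psi p β z + (y ^ p - y)) →
      (∃ (z : _) (y : LaurentSeries F), x₁ + x₂ = psi p β z + (y ^ p - y)) := by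
    rintro _ _ ⟨z₁, y₁, rfl⟩ ⟨z₂, y₂, rfl⟩
    refine ⟨z₁ + z₂, y₁ + y₂, ?_⟩
    rw [map_add, add_pow_char]
    abel
  have hneg : ∀ (j : ℕ), j ≠ 0 → ∀ b : F,
      ∃ (z : _) (y : LaurentSeries F), single (-(j : ℤ)) b = psi p β z + (y ^ p - y) := by
    intro j
    induction j using Nat.strong_induction_on with
    | _ j ih =>
      intro hj b
      by_cases hd : p ∣ j
      · obtain ⟨i, rfl⟩ := hd
        have hi : i ≠ 0 := by rintro rfl; simp at hj
        have hlt : i < p * i := by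
          have := hp.out.two_le
          have : 0 < i := Nat.pos_of_ne_zero hi
          nlinarith
        obtain ⟨b', rfl⟩ : ∃ b', frobenius F p b' = b := surjective_frobenius F p b
        have := hadd _ _ (ih i hlt hi b') ⟨0, single (-(i : ℤ)) b', (by rw [map_zero, zero_add])⟩
        convert! this using 5
        rw [HahnSeries.single_pow, frobenius_def]
        simp
      · refine ⟨(0, Finsupp.single ⟨j, hd⟩ b), 0, ?_⟩
        rw [psi_apply]
        simp [hp.out.ne_zero]
  have hzero : ∀ b : F, ∃ (z : _) (y : LaurentSeries F), single (0 : ℤ) b = psi p β z + (y ^ p - y) := by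
    intro b
    obtain ⟨b', hb'⟩ := (fin_trace p (b - Algebra.trace (ZMod p) F b • β)).1 (by simp [hβ])
    refine ⟨(Algebra.trace (ZMod p) F b, 0), single 0 b', ?_⟩
    rw [psi_apply, Finsupp.sum_zero_index, add_zero]
    have h' := congrArg (HahnSeries.C (Γ := ℤ)) hb'
    simp only [map_sub, map_pow] at h'
    change HahnSeries.C b = HahnSeries.C _ + (HahnSeries.C b' ^ p - HahnSeries.C b')
    rw [h']
    abel
  have hmain : ∀ (N : ℕ) (x : LaurentSeries F), (∀ i : ℤ, i < -(N : ℤ) → x.coeff i = 0) →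
      ∃ (z : _) (y : LaurentSeries F), x = psi p β z + (y ^ p - y) := by
    intro N
    induction N with
    | zero =>
      intro x hx
      obtain ⟨y, hy⟩ := ps_wp p (PowerSeries.mk fun n => if n = 0 then 0 else x.coeff n) (by
        rw [← PowerSeries.coeff_zero_eq_constantCoeff_apply, PowerSeries.coeff_mk, if_pos rfl])
      have := hadd _ _ (hzero (x.coeff 0)) ⟨0, ofPowerSeries ℤ F y, (by rw [map_zero, zero_add])⟩
      convert! this using 5
      rw [← map_pow, ← map_sub, hy]
      ext i
      rw [HahnSeries.coeff_add, PowerSeries.coeff_coe]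
      by_cases h0 : i < 0
      · rw [if_pos h0, coeff_single_of_ne h0.ne, hx i (by simpa using h0), add_zero]
      · rw [if_neg h0]
        push Not at h0
        lift i to ℕ using h0
        rcases Nat.eq_zero_or_pos i with rfl | hi
        · simp
        · rw [coeff_single_of_ne (by omega)]
          simp [hi.ne']
    | succ N ih =>
      intro x hx
      have := hadd _ _ (hneg (N + 1) (by omega) (x.coeff (-((N + 1 : ℕ) : ℤ))))
        (ih (x - single (-((N + 1 : ℕ) : ℤ)) (x.coeff (-((N + 1 : ℕ) : ℤ)))) (by
          intro i hi
          rw [HahnSeries.coeff_sub]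
          by_cases h : i = -((N + 1 : ℕ) : ℤ)
          · subst h; simp
          · rw [coeff_single_of_ne h, hx i (by omega), sub_zero]))
      rwa [add_sub_cancel] at this
  apply hmain (x.order.natAbs) x
  intro i hi
  apply HahnSeries.coeff_eq_zero_of_lt_order
  omega

end

noncomputable section

theorem vlem {k F G : Type} [Field k] [Field F] [Algebra k F] [FiniteDimensional k F] [IsGalois k F]
    [Group G] [Fintype G] (e : ℕ) [NeZero e] (ζ : F) (hζ : IsPrimitiveRoot ζ e)
    (τ : G → F ≃ₐ[k] F) (ω : G → rootsOfUnity e F)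
    (hbij : Function.Bijective fun g => (ω g, τ g)) (hτ : ∀ g h, τ (g * h) = τ g * τ h)
    (hω : ∀ g h, ((ω (g * h) : Fˣ) : F) = τ g ((ω h : Fˣ) : F) * ((ω g : Fˣ) : F)) :
    ∃ B : (G → k) ≃+ (Fin e → F), ∀ (c c' : G → k) (σ : G), (∀ g, c' g = c (σ⁻¹ * g)) →
      ∀ j : Fin e, B c' j = τ σ (B c j) * (((ω σ : Fˣ) : F)⁻¹) ^ (j : ℕ) := by
  classical
  let a : F := IsGalois.normalBasis k F 1
  have ha : ∀ t : F ≃ₐ[k] F, IsGalois.normalBasis k F t = t a := IsGalois.normalBasis_apply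
  let Bl : (G → k) →ₗ[k] (Fin e → F) :=
    { toFun := fun c j => ∑ g, c g • (τ g a * (((ω g : Fˣ) : F)⁻¹) ^ (j : ℕ))
      map_add' := by
        intro x y; ext j; simp [add_smul, Finset.sum_add_distrib]
      map_smul' := by
        intro r x; ext j; simp [Finset.smul_sum, mul_smul] }
  have hBl : ∀ c j, Bl c j = ∑ g, c g • (τ g a * (((ω g : Fˣ) : F)⁻¹) ^ (j : ℕ)) := fun _ _ => rfl
  let E := Equiv.ofBijective _ hbij
  have hE : ∀ g, E g = (ω g, τ g) := fun _ => rfl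
  have : Finite (rootsOfUnity e F) := inferInstance
  let _ : Fintype (rootsOfUnity e F) := Fintype.ofFinite _
  have hcard : Fintype.card (rootsOfUnity e F) = e := by
    rw [← Nat.card_eq_fintype_card]
    exact hζ.card_rootsOfUnity
  let fe : Fin e ≃ rootsOfUnity e F := (Fintype.equivFinOfCardEq hcard).symm
  have hinj : Function.Injective Bl := by
    rw [injective_iff_map_eq_zero]
    intro c hc
    have h1 : ∀ j : Fin e, ∑ i : Fin e, (∑ t : F ≃ₐ[k] F, c (E.symm (fe i, t)) • t a) *
        (((fe i : Fˣ) : F)⁻¹) ^ (j : ℕ) = 0 := by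
      intro j
      have h2 : Bl c j = 0 := by rw [hc]; rfl
      rw [hBl, ← Equiv.sum_comp E.symm, Fintype.sum_prod_type, ← Equiv.sum_comp fe] at h2
      rw [← h2]
      refine Finset.sum_congr rfl fun i _ => ?_
      rw [Finset.sum_mul]
      refine Finset.sum_congr rfl fun t _ => ?_
      have h3 : (ω (E.symm (fe i, t)), τ (E.symm (fe i, t))) = (fe i, t) := by
        rw [← hE, Equiv.apply_symm_apply]
      rw [Prod.mk.injEq] at h3
      rw [h3.1, h3.2, smul_mul_assoc]
    have h4 := Matrix.eq_zero_of_forall_pow_sum_mul_pow_eq_zero (f := fun i : Fin e => (((fe i : Fˣ) : F)⁻¹))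
      (by
        intro i i' h
        exact fe.injective (Subtype.ext (Units.ext (inv_injective h)))) h1
    funext g
    obtain ⟨⟨w, t⟩, rfl⟩ := E.symm.surjective g
    have h5 := congrFun h4 (fe.symm w)
    simp only [Equiv.apply_symm_apply, ← ha, Pi.zero_apply] at h5
    exact Fintype.linearIndependent_iff.1 (IsGalois.normalBasis k F).linearIndependent _ h5 t
  have hfin : Module.finrank k (G → k) = Module.finrank k (Fin e → F) := by
    rw [Module.finrank_pi, Module.finrank_pi_fintype, Fintype.card_congr E, Fintype.card_prod, hcard]
    simp [← Nat.card_eq_fintype_card, IsGalois.card_aut_eq_finrank]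
    left
    rw [Nat.card_eq_fintype_card, Fintype.card_fin]
  have hsurj : Function.Surjective Bl :=
    (LinearMap.injective_iff_surjective_of_finrank_eq_finrank hfin).1 hinj
  refine ⟨(LinearEquiv.ofBijective Bl ⟨hinj, hsurj⟩).toAddEquiv, ?_⟩
  intro c c' σ hc j
  change Bl c' j = τ σ (Bl c j) * _
  rw [hBl, hBl, map_sum, Finset.sum_mul, ← Equiv.sum_comp (Equiv.mulLeft σ)]
  refine Finset.sum_congr rfl fun g _ => ?_
  rw [hc, map_smul, smul_mul_assoc]
  simp only [Equiv.coe_mulLeft, inv_mul_cancel_left, hτ, hω, map_mul, map_pow, map_inv₀, AlgEquiv.mul_apply]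
  rw [mul_inv, mul_pow, mul_assoc]

theorem hlem {k G : Type} (p : ℕ) [Fact p.Prime] [Field k] [Finite k] [Algebra (ZMod p) k]
    [Group G] [Finite G] :
    ∃ (d : ℕ) (_ : 0 < d) (H : (G → k) ≃+ (Fin d → MonoidAlgebra (ZMod p) G)),
      ∀ (c c' : G → k) (σ : G), (∀ g, c' g = c (σ⁻¹ * g)) →
      ∀ l, H c' l = MonoidAlgebra.single σ (1 : ZMod p) * H c l := by
  classical
  let b := Module.finBasis (ZMod p) k
  let H : (G → k) ≃+ (Fin (Module.finrank (ZMod p) k) → MonoidAlgebra (ZMod p) G) :=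
    { toFun := fun c l => MonoidAlgebra.ofCoeff (Finsupp.equivFunOnFinite.symm fun g => b.equivFun (c g) l)
      invFun := fun m g => b.equivFun.symm fun l => (m l).coeff g
      left_inv := by
        intro c
        funext g
        simp
      right_inv := by
        intro m
        funext l
        ext g
        change b.equivFun (b.equivFun.symm _) l = _
        rw [LinearEquiv.apply_symm_apply]
      map_add' := by
        intro x y
        funext l
        ext g
        simp }
  refine ⟨_, Module.finrank_pos, H, ?_⟩
  intro c c' σ hc l
  ext g
  rw [MonoidAlgebra.coeff_single_mul_eq_mul_coeff (σ⁻¹ * g) (by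
    intro m _
    rw [eq_inv_mul_iff_mul_eq]), one_mul]
  change b.equivFun (c' g) l = b.equivFun (c (σ⁻¹ * g)) l
  rw [hc]

theorem ulem (p e : ℕ) [hp : Fact p.Prime] [NeZero e] (hpe : Nat.Coprime p e) :
    ∃ u : {m : ℕ // ¬ p ∣ m} ≃ ℕ × Fin e, ∀ m, ((u m).2 : ℕ) = m.1 % e := by
  let q : {m : ℕ // ¬ p ∣ m} → Fin e := fun m => ⟨m.1 % e, Nat.mod_lt _ (NeZero.pos e)⟩
  have hinf : ∀ j : Fin e, Infinite {m // q m = j} := by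
    intro j
    obtain ⟨z, hz1, hz2⟩ := Nat.chineseRemainder hpe 1 j
    refine Infinite.of_injective (fun N : ℕ => (⟨⟨z + p * e * N, ?_⟩, ?_⟩ : {m // q m = j})) ?_
    · intro h
      have h1 : p ∣ z := by
        rw [mul_assoc] at h
        exact (Nat.dvd_add_left (Dvd.intro _ rfl)).1 h
      have h2 : p ∣ 1 := (hz1.dvd_iff dvd_rfl).1 h1
      exact hp.out.one_lt.ne' (Nat.dvd_one.1 h2)
    · ext
      simp only [q]
      rw [show p * e * N = e * (p * N) by ring, Nat.add_mul_mod_self_left]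
      have : z % e = j % e := hz2
      rw [this, Nat.mod_eq_of_lt j.2]
    · intro N N' h
      have hne : p * e ≠ 0 := mul_ne_zero hp.out.ne_zero (NeZero.ne e)
      have := congrArg (fun x => x.1.1) h
      simp only [Nat.add_left_cancel_iff] at this
      exact Nat.eq_of_mul_eq_mul_left (Nat.pos_of_ne_zero hne) this
  have hden : ∀ j : Fin e, Nonempty ({m // q m = j} ≃ ℕ) := by
    intro j
    have := hinf j
    exact (nonempty_denumerable _).map fun h => h.eqv
  let w := fun j => (hden j).some
  let u := ((Equiv.sigmaFiberEquiv q).symm.trans (Equiv.sigmaCongrRight w)).trans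
    ((Equiv.sigmaEquivProd _ _).trans (Equiv.prodComm _ _))
  exact ⟨u, fun m => rfl⟩

theorem tlem {k F G : Type} [Field k] [Finite k] [Field F] [Algebra k F] [FiniteDimensional k F] [IsGalois k F]
    [Group G] [Finite G] (p : ℕ) [hp : Fact p.Prime] [Algebra (ZMod p) k]
    (e : ℕ) [NeZero e] (hpe : Nat.Coprime p e) (ζ : F) (hζ : IsPrimitiveRoot ζ e)
    (τ : G → F ≃ₐ[k] F) (ω : G → rootsOfUnity e F)
    (hbij : Function.Bijective fun g => (ω g, τ g)) (hτ : ∀ g h, τ (g * h) = τ g * τ h)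
    (hω : ∀ g h, ((ω (g * h) : Fˣ) : F) = τ g ((ω h : Fˣ) : F) * ((ω g : Fˣ) : F)) :
    ∃ T : ({m : ℕ // ¬ p ∣ m} →₀ F) ≃+ (ℕ →₀ MonoidAlgebra (ZMod p) G),
      ∀ (z z' : {m : ℕ // ¬ p ∣ m} →₀ F) (σ : G),
      (∀ m, z' m = τ σ (z m) * (((ω σ : Fˣ) : F)⁻¹) ^ m.1) →
      ∀ i, T z' i = MonoidAlgebra.single σ (1 : ZMod p) * T z i := by
  classical
  have := Fintype.ofFinite G
  obtain ⟨B, hB⟩ := vlem e ζ hζ τ ω hbij hτ hω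
  obtain ⟨d, hd, H, hH⟩ := hlem (k := k) (G := G) p
  obtain ⟨u, hu⟩ := ulem p e hpe
  have : NeZero d := ⟨hd.ne'⟩
  obtain ⟨w⟩ : Nonempty (ℕ × Fin d ≃ ℕ) := (nonempty_denumerable _).map fun h => h.eqv
  let BH : (Fin e →₀ F) ≃+ (Fin d →₀ MonoidAlgebra (ZMod p) G) :=
    (Finsupp.linearEquivFunOnFinite ℤ F (Fin e)).toAddEquiv.trans ((B.symm.trans H).trans
      (Finsupp.linearEquivFunOnFinite ℤ (MonoidAlgebra (ZMod p) G) (Fin d)).symm.toAddEquiv)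
  have hBH : ∀ x l, BH x l = H (B.symm x) l := fun _ _ => rfl
  let T : ({m : ℕ // ¬ p ∣ m} →₀ F) ≃+ (ℕ →₀ MonoidAlgebra (ZMod p) G) :=
    (Finsupp.domCongr u).trans (Finsupp.curryAddEquiv.trans
      ((Finsupp.mapRange.addEquiv BH).trans (Finsupp.curryAddEquiv.symm.trans (Finsupp.domCongr w))))
  have hT : ∀ z n, T z n = BH ((Finsupp.domCongr u z).curry (w.symm n).1) (w.symm n).2 := by
    intro z n
    rfl
  refine ⟨T, ?_⟩
  intro z z' σ hz i
  rw [hT, hT, hBH, hBH]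
  refine hH _ _ σ ?_ _
  set x := (Finsupp.domCongr u z).curry (w.symm i).1 with hx
  set x' := (Finsupp.domCongr u z').curry (w.symm i).1 with hx'
  have hxx : ∀ j, x' j = τ σ (x j) * (((ω σ : Fˣ) : F)⁻¹) ^ (j : ℕ) := by
    intro j
    have h1 : x' j = z' (u.symm ((w.symm i).1, j)) := rfl
    have h2 : x j = z (u.symm ((w.symm i).1, j)) := rfl
    rw [h1, h2, hz]
    congr 1
    have h3 := hu (u.symm ((w.symm i).1, j))
    rw [Equiv.apply_symm_apply] at h3
    simp only at h3
    rw [h3]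
    apply pow_eq_pow_mod
    have h4 := (mem_rootsOfUnity e (ω σ : Fˣ)).1 (ω σ).2
    rw [inv_pow, ← Units.val_pow_eq_pow_val, h4]
    simp
  have hc := hB (B.symm x) (fun g => B.symm x (σ⁻¹ * g)) σ (fun g => rfl)
  have : B (fun g => B.symm x (σ⁻¹ * g)) = x' := by
    funext j
    rw [hc, hxx, AddEquiv.apply_symm_apply]
  intro g
  rw [← this, AddEquiv.symm_apply_apply]

end

noncomputable section

theorem lau_single_eq {F : Type} [Field F] (i : ℤ) (a : F) :
    (single i a : LaurentSeries F) = single (0 : ℤ) a * (single (1 : ℤ) (1 : F)) ^ i := by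
  rw [← RatFunc.single_zpow, HahnSeries.single_mul_single, zero_add, mul_one]

theorem e0lem {k F E : Type} [Field k] [Field F] [Algebra k F] [Normal k F] [Field E]
    (C : F →+* E) (g : E →+* E) (hg : ∀ r : k, g (C (algebraMap k F r)) = C (algebraMap k F r)) :
    ∃ τ : F ≃ₐ[k] F, ∀ a, C (τ a) = g (C a) := by
  let _ : Algebra F E := C.toAlgebra
  let _ : Algebra k E := (C.comp (algebraMap k F)).toAlgebra
  have : IsScalarTower k F E := IsScalarTower.of_algebraMap_eq fun r => rfl
  let g' : E →ₐ[k] E :=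
    { g with
      commutes' := hg }
  exact ⟨AlgHom.restrictNormal' g' F, fun a => AlgHom.restrictNormal_commutes g' F a⟩

theorem e1lem {k F : Type} [Field k] [Field F] [Finite F] [Algebra k F] [FiniteDimensional k F]
    [IsGalois k F] (e : ℕ) (he : 0 < e) (ζ : F) (hζ : IsPrimitiveRoot ζ e)
    (g : LaurentSeries F →+* LaurentSeries F)
    (hg : ∀ y, g (lauExp (algebraMap k F) e he y) = lauExp (algebraMap k F) e he y) :
    ∃ (ω : rootsOfUnity e F) (τ : F ≃ₐ[k] F), ∀ i a,
      g (single i a) = single i (τ a * (((ω : Fˣ) ^ i : Fˣ) : F)) := by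
  have : NeZero e := ⟨he.ne'⟩
  have hs0 : (single (1 : ℤ) (1 : F) : LaurentSeries F) ≠ 0 := by simp
  have hpow : (g (single (1 : ℤ) (1 : F)) / single (1 : ℤ) (1 : F)) ^ e = 1 := by
    have h1 : (single (1 : ℤ) (1 : F)) ^ e = lauExp (algebraMap k F) e he (single 1 1) := by
      rw [lauExp_single, single_pow]; simp
    rw [div_pow, ← map_pow, h1, hg, div_self]
    rw [← h1]
    exact pow_ne_zero _ hs0
  have hζ' : IsPrimitiveRoot (HahnSeries.C (Γ := ℤ) ζ) e :=
    hζ.map_of_injective (HahnSeries.C (Γ := ℤ)).injective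
  obtain ⟨j, -, hj⟩ := hζ'.eq_pow_of_pow_eq_one hpow
  have hg1 : g (single (1 : ℤ) (1 : F)) = single (0 : ℤ) (ζ ^ j) * single (1 : ℤ) (1 : F) := by
    rw [eq_div_iff hs0, ← map_pow] at hj
    exact hj.symm
  obtain ⟨τ, hτ⟩ := e0lem (HahnSeries.C (Γ := ℤ) (R := F)) g (fun r : k => by
    have := hg (single 0 r)
    rwa [lauExp_single, mul_zero] at this)
  have hζu : IsUnit ζ := hζ.isUnit he.ne'
  refine ⟨⟨hζu.unit ^ j, ?_⟩, τ, ?_⟩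
  · rw [mem_rootsOfUnity, ← pow_mul, mul_comm, pow_mul]
    have : hζu.unit ^ e = 1 := by
      ext
      simp [hζ.pow_eq_one]
    rw [this, one_pow]
  · intro i a
    have h2 : single (0 : ℤ) (τ a) = g (single (0 : ℤ) a) := hτ a
    rw [lau_single_eq i a, map_mul, map_zpow₀, hg1, mul_zpow, ← h2]
    have h3 : (single (0 : ℤ) (ζ ^ j) : LaurentSeries F) ^ i =
        single (0 : ℤ) (((hζu.unit ^ j) ^ i : Fˣ) : F) := by
      have h4 := map_zpow₀ (HahnSeries.C (Γ := ℤ) (R := F)) (ζ ^ j) i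
      rw [Units.val_zpow_eq_zpow_val, Units.val_pow_eq_pow_val, IsUnit.unit_spec]
      exact h4.symm
    rw [h3, ← RatFunc.single_zpow, ← mul_assoc, single_mul_single, single_mul_single]
    simp

theorem e2lem {k F : Type} [Field k] [Field F] [Algebra k F] [FiniteDimensional k F]
    (e : ℕ) (he : 0 < e) (ω : rootsOfUnity e F) (τ : F ≃ₐ[k] F) :
    Function.Bijective (lauTwist (τ : F →+* F) ω) ∧
    ∀ y, lauTwist (τ : F →+* F) ω (lauExp (algebraMap k F) e he y) =
      lauExp (algebraMap k F) e he y := by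
  have hfix : ∀ y, lauTwist (τ : F →+* F) ω (lauExp (algebraMap k F) e he y) =
      lauExp (algebraMap k F) e he y := by
    intro y
    ext i
    rw [lauTwist_coeff]
    by_cases hi : (e : ℤ) ∣ i
    · obtain ⟨i, rfl⟩ := hi
      rw [lauExp_coeff_mul, zpow_mul, zpow_natCast, (mem_rootsOfUnity e (ω : Fˣ)).1 ω.2]
      simp
    · rw [lauExp_coeff_of_not_dvd _ _ _ _ _ hi]
      simp
  refine ⟨⟨RingHom.injective _, ?_⟩, hfix⟩
  intro x
  have h2 : ∀ a : F, single (0 : ℤ) a ∈ (lauTwist (τ : F →+* F) ω).range := by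
    intro a
    refine ⟨single 0 (τ.symm a), ?_⟩
    rw [lauTwist_single]
    simp
  refine lau_gen e he (lauTwist (τ : F →+* F) ω).range (fun y => ⟨_, hfix y⟩) h2 ?_ x
  obtain ⟨c, hc⟩ := h2 (((ω : Fˣ)⁻¹ : Fˣ) : F)
  refine ⟨c * single 1 1, ?_⟩
  rw [map_mul, hc, lauTwist_single, single_mul_single]
  simp

theorem e3lem {k F : Type} [Field k] [Field F] [Algebra k F] [FiniteDimensional k F]
    (e : ℕ) (he : 0 < e) (g h : LaurentSeries F →+* LaurentSeries F)
    (hg : ∀ y, g (lauExp (algebraMap k F) e he y) = lauExp (algebraMap k F) e he y)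
    (hh : ∀ y, h (lauExp (algebraMap k F) e he y) = lauExp (algebraMap k F) e he y)
    (hgh : ∀ i a, g (single i a) = h (single i a)) : g = h := by
  ext1 x
  exact lau_gen e he (g.eqLocus h) (fun y => (hg y).trans (hh y).symm) (fun a => hgh 0 a) (hgh 1 1) x

theorem elem {k F K L : Type} [Field k] [Finite k] [Field F] [Finite F] [Algebra k F]
    [Field K] [Field L] [Algebra K L]
    (p : ℕ) [hp : Fact p.Prime] [CharP k p]
    (e : ℕ) (he : 0 < e) (hpe : Nat.Coprime p e) (ζ : F) (hζ : IsPrimitiveRoot ζ e)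
    (θ : LaurentSeries k ≃+* K) (Φ : L ≃+* LaurentSeries F)
    (hΦ : ∀ y, Φ (algebraMap K L (θ y)) = lauExp (algebraMap k F) e he y)
    (W : AddSubgroup L) (hW : W = AddSubgroup.closure (Set.range fun x : L => x ^ p - x)) :
    ∃ E : (L ⧸ W) ≃+ (ZMod p × (ℕ →₀ MonoidAlgebra (ZMod p) (L ≃ₐ[K] L))),
      ∀ (σ : L ≃ₐ[K] L) (x : L),
        (E (QuotientAddGroup.mk (σ x))).1 = (E (QuotientAddGroup.mk x)).1 ∧
        ∀ i : ℕ,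
          (E (QuotientAddGroup.mk (σ x))).2 i =
            MonoidAlgebra.single σ (1 : ZMod p) * (E (QuotientAddGroup.mk x)).2 i := by
  have : NeZero e := ⟨he.ne'⟩
  have : FiniteDimensional k F := inferInstance
  have : IsGalois k F := inferInstance
  let _ : Algebra (ZMod p) k := ZMod.algebra k p
  have hcF : CharP F p := charP_of_injective_algebraMap (algebraMap k F).injective p
  let _ : Algebra (ZMod p) F := ZMod.algebra F p
  have hst : IsScalarTower (ZMod p) k F := IsScalarTower.of_algebraMap_eq' (RingHom.ext_zmod _ _)
  have hcE : CharP (LaurentSeries F) p := charP_of_injective_algebraMap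
    (algebraMap F (LaurentSeries F)).injective p
  have hcL : CharP L p := (RingHom.charP_iff (Φ : L →+* LaurentSeries F) Φ.injective p).2 hcE
  -- the automorphism of `E` attached to `σ`
  let g : (L ≃ₐ[K] L) → (LaurentSeries F →+* LaurentSeries F) := fun σ =>
    ((Φ : L →+* LaurentSeries F).comp (σ : L →+* L)).comp (Φ.symm : LaurentSeries F →+* L)
  have hgd : ∀ σ x, g σ x = Φ (σ (Φ.symm x)) := fun _ _ => rfl
  have hg : ∀ σ y, g σ (lauExp (algebraMap k F) e he y) = lauExp (algebraMap k F) e he y := by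
    intro σ y
    rw [hgd, ← hΦ, RingEquiv.symm_apply_apply, AlgEquiv.commutes]
  choose ω τ hωτ using fun σ => e1lem e he ζ hζ (g σ) (hg σ)
  have hmul : ∀ σ σ' x, g (σ * σ') x = g σ (g σ' x) := by
    intro σ σ' x
    simp [hgd]
  have hτ : ∀ σ σ', τ (σ * σ') = τ σ * τ σ' := by
    intro σ σ'
    ext a
    have h := hmul σ σ' (single 0 a)
    rw [hωτ, hωτ, hωτ] at h
    simpa using single_injective _ h
  have hω : ∀ σ σ', ((ω (σ * σ') : Fˣ) : F) = τ σ ((ω σ' : Fˣ) : F) * ((ω σ : Fˣ) : F) := by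
    intro σ σ'
    have h := hmul σ σ' (single 1 1)
    rw [hωτ, hωτ, hωτ] at h
    simpa using single_injective _ h
  have hginj : ∀ σ σ', g σ = g σ' → σ = σ' := by
    intro σ σ' h
    ext x
    have h1 := DFunLike.congr_fun h (Φ x)
    rw [hgd, hgd] at h1
    simpa using h1
  have hbij : Function.Bijective fun σ => (ω σ, τ σ) := by
    constructor
    · intro σ σ' h
      simp only [Prod.mk.injEq] at h
      apply hginj
      refine e3lem e he _ _ (hg σ) (hg σ') ?_
      intro i a
      rw [hωτ, hωτ, h.1, h.2]
    · rintro ⟨w, t⟩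
      obtain ⟨hb, hfix⟩ := e2lem e he w t
      let R := RingEquiv.ofBijective _ hb
      have hR : ∀ x, R x = lauTwist (t : F →+* F) w x := fun _ => rfl
      let σ : L ≃ₐ[K] L := AlgEquiv.ofRingEquiv (f := (Φ.trans R).trans Φ.symm) (by
        intro r
        obtain ⟨y, rfl⟩ := θ.surjective r
        change Φ.symm (R (Φ _)) = _
        rw [hΦ, hR, hfix, ← hΦ, RingEquiv.symm_apply_apply])
      have hσ : ∀ x, g σ x = lauTwist (t : F →+* F) w x := by
        intro x
        change Φ (Φ.symm (R (Φ (Φ.symm x)))) = _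
        rw [RingEquiv.apply_symm_apply, RingEquiv.apply_symm_apply, hR]
      refine ⟨σ, ?_⟩
      have h3 : τ σ = t := by
        ext a
        have h := hωτ σ 0 a
        rw [hσ, lauTwist_single] at h
        simpa using (single_injective _ h).symm
      have h4 : ω σ = w := by
        have h := hωτ σ 1 1
        rw [hσ, lauTwist_single] at h
        apply Subtype.ext
        apply Units.ext
        simpa using (single_injective _ h).symm
      simp only [h3, h4]
  have hfinG : Finite (L ≃ₐ[K] L) := Finite.of_injective _ hbij.1
  obtain ⟨T, hT⟩ := tlem p e hpe ζ hζ τ ω hbij hτ hω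
  -- the image of `℘`
  have hWmem : ∀ x, x ∈ W ↔ ∃ y : LaurentSeries F, Φ x = y ^ p - y := by
    intro x
    rw [hW]
    constructor
    · intro hx
      induction hx using AddSubgroup.closure_induction with
      | mem x hx =>
        obtain ⟨y, rfl⟩ := hx
        exact ⟨Φ y, by simp⟩
      | zero => exact ⟨0, by simp [hp.out.ne_zero]⟩
      | add x y _ _ h1 h2 =>
        obtain ⟨a, ha⟩ := h1
        obtain ⟨b, hb⟩ := h2
        refine ⟨a + b, ?_⟩
        rw [map_add, ha, hb, add_pow_char]
        ring
      | neg x _ h1 =>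
        obtain ⟨a, ha⟩ := h1
        refine ⟨0 - a, ?_⟩
        rw [map_neg, ha, sub_pow_char, zero_pow hp.out.ne_zero]
        ring
    · rintro ⟨y, hy⟩
      apply AddSubgroup.subset_closure
      refine ⟨Φ.symm y, ?_⟩
      apply Φ.injective
      simp [hy]
  obtain ⟨β, hβ⟩ := Algebra.trace_surjective (ZMod p) F 1
  let A : (ZMod p × ({m : ℕ // ¬ p ∣ m} →₀ F)) →+ L ⧸ W :=
    (QuotientAddGroup.mk' W).comp ((Φ.symm : LaurentSeries F →+* L).toAddMonoidHom.comp (psi p β))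
  have hA : ∀ z, A z = QuotientAddGroup.mk (Φ.symm (psi p β z)) := fun _ => rfl
  have hAinj : Function.Injective A := by
    rw [injective_iff_map_eq_zero]
    rintro ⟨c, a⟩ h
    rw [hA, QuotientAddGroup.eq_zero_iff, hWmem] at h
    obtain ⟨y, hy⟩ := h
    rw [RingEquiv.apply_symm_apply] at hy
    obtain ⟨rfl, rfl⟩ := psi_inj p β hβ c a y hy
    rfl
  have hAsurj : Function.Surjective A := by
    intro x
    obtain ⟨x, rfl⟩ := QuotientAddGroup.mk_surjective x
    obtain ⟨z, y, h⟩ := psi_surj p β hβ (Φ x)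
    refine ⟨z, ?_⟩
    rw [hA, QuotientAddGroup.eq, hWmem]
    refine ⟨y, ?_⟩
    rw [map_add, map_neg, RingEquiv.apply_symm_apply, h]
    ring
  let AE := AddEquiv.ofBijective A ⟨hAinj, hAsurj⟩
  have hAE : ∀ z, AE z = A z := fun _ => rfl
  -- action on the coordinates
  have key : ∀ (σ : L ≃ₐ[K] L) (c : ZMod p) (a a' : {m : ℕ // ¬ p ∣ m} →₀ F),
      (∀ m, a' m = τ σ (a m) * (((ω σ : Fˣ) : F)⁻¹) ^ m.1) →
      ∃ y : LaurentSeries F, g σ (psi p β (c, a)) = psi p β (c, a') + (y ^ p - y) := by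
    intro σ c a a' ha
    have hsum : a'.sum (fun m b => (single (-(m.1 : ℤ)) b : LaurentSeries F)) =
        a.sum (fun m b => g σ (single (-(m.1 : ℤ)) b)) := by
      rw [Finsupp.sum_of_support_subset a' (s := a.support), Finsupp.sum]
      · refine Finset.sum_congr rfl fun m _ => ?_
        rw [hωτ, ha]
        simp
      · intro m hm
        rw [Finsupp.mem_support_iff] at hm ⊢
        intro h
        apply hm
        rw [ha, h, map_zero, zero_mul]
      · simp
    have htr : Algebra.trace (ZMod p) F (c • (τ σ β - β)) = 0 := by
      have h1 := Algebra.trace_eq_of_algEquiv ((τ σ).restrictScalars (ZMod p)) β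
      rw [AlgEquiv.restrictScalars_apply] at h1
      rw [map_smul, map_sub, h1, sub_self, smul_zero]
    obtain ⟨b, hb⟩ := (fin_trace p _).1 htr
    refine ⟨single 0 b, ?_⟩
    have h2 : (single (0 : ℤ) b) ^ p - single (0 : ℤ) b = single (0 : ℤ) (c • (τ σ β - β)) := by
      rw [← hb, single_pow, smul_zero, single_sub]
    have h3 : τ σ (c • β) = c • τ σ β := map_smul ((τ σ).restrictScalars (ZMod p)) c β
    rw [h2, psi_apply, psi_apply, map_add, map_finsuppSum, hsum, hωτ, h3, smul_sub, single_sub]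
    simp only [zpow_zero, Units.val_one, mul_one]
    ring
  refine ⟨AE.symm.trans ((AddEquiv.refl (ZMod p)).prodCongr T), ?_⟩
  intro σ x
  obtain ⟨⟨c, a⟩, hca⟩ := AE.surjective (QuotientAddGroup.mk x)
  let a' : {m : ℕ // ¬ p ∣ m} →₀ F := Finsupp.onFinset a.support
    (fun m => τ σ (a m) * (((ω σ : Fˣ) : F)⁻¹) ^ m.1) (by
      intro m hm
      rw [Finsupp.mem_support_iff]
      intro h
      apply hm
      rw [h, map_zero, zero_mul])
  have ha' : ∀ m, a' m = τ σ (a m) * (((ω σ : Fˣ) : F)⁻¹) ^ m.1 := fun _ => rfl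
  have hσ : AE (c, a') = QuotientAddGroup.mk (σ x) := by
    obtain ⟨y, hy⟩ := key σ c a a' ha'
    rw [hAE, hA, QuotientAddGroup.eq, hWmem] at hca ⊢
    obtain ⟨w, hw⟩ := hca
    refine ⟨y + g σ w, ?_⟩
    rw [map_add, map_neg, RingEquiv.apply_symm_apply] at hw ⊢
    have h4 : Φ (σ x) = g σ (Φ x) := by rw [hgd, RingEquiv.symm_apply_apply]
    have h5 : Φ x = psi p β (c, a) + (w ^ p - w) := by rw [← hw]; ring
    rw [h4, h5, map_add, hy, add_pow_char, map_sub, map_pow]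
    ring
  rw [← hσ, ← hca]
  simp only [AddEquiv.trans_apply, AddEquiv.symm_apply_apply]
  exact ⟨rfl, hT a a' σ ha'⟩

end

noncomputable section

theorem f1lem {K E Ω : Type} [Field K] [Field E] [Field Ω] [Algebra K Ω] [IsSepClosure K Ω]
    (j : K →+* E) (S : Set E)
    (hS : ∀ s ∈ S, ∃ P : Polynomial K, P.Separable ∧ P.eval₂ j s = 0)
    (hgen : ∀ T : Subring E, (∀ r, j r ∈ T) → S ⊆ T → ∀ x, x ∈ T) :
    ∃ ψ : E →+* Ω, ∀ r, ψ (j r) = algebraMap K Ω r := by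
  let _ : Algebra K E := j.toAlgebra
  have hsep : Algebra.IsSeparable K E := by
    refine ⟨fun x => ?_⟩
    rw [← mem_separableClosure_iff]
    refine hgen (separableClosure K E).toSubring (fun r => (separableClosure K E).algebraMap_mem r) ?_ x
    intro s hs
    obtain ⟨P, hP, h0⟩ := hS s hs
    change s ∈ separableClosure K E
    rw [mem_separableClosure_iff]
    exact hP.of_dvd (minpoly.dvd K s h0)
  have : IsSepClosed Ω := IsSepClosure.sep_closed K
  let ψ : E →ₐ[K] Ω := IsSepClosed.lift
  exact ⟨ψ, fun r => ψ.commutes r⟩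

theorem f2lem {A Ω : Type} [Field A] [Finite A] [Field Ω] (i : A →+* Ω) (x : Ω) :
    (∃ a, i a = x) ↔ x ^ Nat.card A = x := by
  classical
  have := Fintype.ofFinite A
  have h1 : 1 < Nat.card A := Finite.one_lt_card
  constructor
  · rintro ⟨a, rfl⟩
    rw [← map_pow, Nat.card_eq_fintype_card, FiniteField.pow_card]
  · intro hx
    let P : Polynomial Ω := Polynomial.X ^ Nat.card A - Polynomial.X
    have hP0 : P ≠ 0 := FiniteField.X_pow_card_sub_X_ne_zero Ω h1
    have hPd : P.natDegree = Nat.card A := FiniteField.X_pow_card_sub_X_natDegree_eq Ω h1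
    have hroot : ∀ y, y ∈ P.roots.toFinset ↔ y ^ Nat.card A = y := by
      intro y
      rw [Multiset.mem_toFinset, Polynomial.mem_roots hP0]
      simp [P, sub_eq_zero]
    have hsub : Finset.univ.image i ⊆ P.roots.toFinset := by
      intro y hy
      obtain ⟨a, -, rfl⟩ := Finset.mem_image.1 hy
      rw [hroot, ← map_pow, Nat.card_eq_fintype_card, FiniteField.pow_card]
    have heq : Finset.univ.image i = P.roots.toFinset := by
      apply Finset.eq_of_subset_of_card_le hsub
      rw [Finset.card_image_of_injective _ i.injective, Finset.card_univ, ← Nat.card_eq_fintype_card]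
      exact (Multiset.toFinset_card_le _).trans ((Polynomial.card_roots' P).trans hPd.le)
    have := (hroot x).2 hx
    rw [← heq] at this
    obtain ⟨a, -, rfl⟩ := Finset.mem_image.1 this
    exact ⟨a, rfl⟩

theorem f3lem {F : Type} [Field F] (e : ℕ) (he : (e : F) ≠ 0) (Y : LaurentSeries F) (hY : Y ≠ 0) :
    ∃ (a : ℤ) (c : F) (v : LaurentSeries F), Y = single a c * v ^ e := by
  have h0 : PowerSeries.constantCoeff Y.powerSeriesPart ≠ 0 := by
    rw [← PowerSeries.coeff_zero_eq_constantCoeff_apply, LaurentSeries.powerSeriesPart_coeff]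
    simpa using hY
  set c := PowerSeries.constantCoeff Y.powerSeriesPart with hc
  obtain ⟨v, hv⟩ := ps_root e he (PowerSeries.C c⁻¹ * Y.powerSeriesPart) (by
    rw [map_mul, ← hc, PowerSeries.constantCoeff_C, inv_mul_cancel₀ h0])
  refine ⟨Y.order, c, ofPowerSeries ℤ F v, ?_⟩
  rw [← map_pow, hv, map_mul, HahnSeries.ofPowerSeries_C, ← mul_assoc]
  have h1 : (single Y.order c : LaurentSeries F) * HahnSeries.C c⁻¹ = single Y.order 1 := by
    change single Y.order c * single 0 c⁻¹ = _
    rw [single_mul_single, add_zero, mul_inv_cancel₀ h0]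
  rw [h1]
  exact (LaurentSeries.single_order_mul_powerSeriesPart Y).symm

theorem lauExp_comp {A B D : Type} [Field A] [Field B] [Field D] (χ : A →+* B) (φ : B →+* D)
    (e : ℕ) (he : 0 < e) (y : LaurentSeries A) :
    lauExp (φ.comp χ) e he y = lauExp φ e he (lauTwist χ 1 y) := by
  ext i
  by_cases hi : (e : ℤ) ∣ i
  · obtain ⟨i, rfl⟩ := hi
    rw [lauExp_coeff_mul, lauExp_coeff_mul, lauTwist_coeff]
    simp
  · rw [lauExp_coeff_of_not_dvd _ _ _ _ _ hi, lauExp_coeff_of_not_dvd _ _ _ _ _ hi]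

theorem f4lem {k K Ω : Type} [Field k] [Finite k] [Field K] [Field Ω] [Algebra K Ω] [IsSepClosure K Ω]
    (p : ℕ) [hp : Fact p.Prime] [CharP k p]
    (e : ℕ) (he : 0 < e) (hek : (e : k) ≠ 0)
    (θ : LaurentSeries k ≃+* K)
    (ζ : Ω) (hζ : IsPrimitiveRoot ζ e)
    (Kn : IntermediateField K Ω) (hKn : Kn = IntermediateField.adjoin K {ζ})
    (Ln : IntermediateField K Ω)
    (hLn : Ln = Kn ⊔ IntermediateField.adjoin K {x : Ω | x ^ e ∈ Kn}) :
    ∃ (F : Type) (_ : Field F) (_ : Finite F) (_ : Algebra k F) (ζ' : F)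
      (Φ : ↥Ln ≃+* LaurentSeries F), IsPrimitiveRoot ζ' e ∧
      ∀ y, Φ (algebraMap K Ln (θ y)) = lauExp (algebraMap k F) e he y := by
  let _ : Algebra k K := ((θ : LaurentSeries k →+* K).comp (HahnSeries.C (Γ := ℤ) (R := k))).toAlgebra
  let _ : Algebra k Ω := ((algebraMap K Ω).comp (algebraMap k K)).toAlgebra
  have : IsScalarTower k K Ω := IsScalarTower.of_algebraMap_eq fun r => rfl
  have hcK : CharP K p := charP_of_injective_algebraMap (algebraMap k K).injective p
  -- the residue fields
  let F' : IntermediateField k Ω := IntermediateField.adjoin k {ζ}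
  have hζint : IsIntegral k ζ := by
    refine IsIntegral.of_pow he ?_
    rw [hζ.pow_eq_one]
    exact isIntegral_one
  have hF'fd : FiniteDimensional k F' := IntermediateField.adjoin.finiteDimensional hζint
  have hF'fin : Finite F' := Module.finite_of_finite k
  let SF : Set Ω := {z | z ^ e ∈ F'}
  have hSFfin : SF.Finite := by
    have h1 : (F' : Set Ω).Finite := Set.toFinite _
    refine Set.Finite.preimage' (f := fun z : Ω => z ^ e) h1 ?_
    intro b _
    refine (Polynomial.nthRoots e b).finite_toSet.subset ?_
    intro z hz
    exact (Polynomial.mem_nthRoots he).2 hz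
  let F : IntermediateField k Ω := IntermediateField.adjoin k SF
  have : Finite SF := hSFfin
  have hFfd : FiniteDimensional k F := by
    refine IntermediateField.finiteDimensional_adjoin ?_
    intro z hz
    refine IsIntegral.of_pow he ?_
    have h2 : IsIntegral k (⟨z ^ e, hz⟩ : F') := Algebra.IsIntegral.isIntegral _
    exact h2.map F'.val
  have hFfin : Finite F := Module.finite_of_finite k
  have hSFF : ∀ z : Ω, z ^ e ∈ F' → z ∈ F := fun z hz => IntermediateField.subset_adjoin k SF hz
  have hζF' : ζ ∈ F' := IntermediateField.mem_adjoin_simple_self k ζ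
  have hζF : ζ ∈ F := hSFF ζ (pow_mem hζF' e)
  have hF'F : F' ≤ F := IntermediateField.adjoin_le_iff.2 (by
    intro z hz
    rw [Set.mem_singleton_iff] at hz
    rw [hz]
    exact hζF)
  have hζKn : ζ ∈ Kn := by rw [hKn]; exact IntermediateField.mem_adjoin_simple_self K ζ
  have hF'Kn : F' ≤ Kn.restrictScalars k := IntermediateField.adjoin_le_iff.2 (by
    intro z hz
    rw [Set.mem_singleton_iff] at hz
    rw [hz]
    exact hζKn)
  have hrad : ∀ z : Ω, z ^ e ∈ Kn → z ∈ Ln := by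
    intro z hz
    rw [hLn]
    exact (le_sup_right : _ ≤ Kn ⊔ _) (IntermediateField.subset_adjoin K _ hz)
  have hFLn : F ≤ Ln.restrictScalars k := IntermediateField.adjoin_le_iff.2 (by
    intro z hz
    exact hrad z (hF'Kn hz))
  -- the embedding
  let ex : LaurentSeries k →+* LaurentSeries F := lauExp (algebraMap k F) e he
  have hspow : (single (1 : ℤ) (1 : F)) ^ e = ex (single 1 1) := by
    rw [lauExp_single, single_pow]; simp
  obtain ⟨ψ, hψ⟩ : ∃ ψ : LaurentSeries F →+* Ω, ∀ r, ψ (ex (θ.symm r)) = algebraMap K Ω r := by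
    refine f1lem (ex.comp (θ.symm : K →+* LaurentSeries k))
      (insert (single (1 : ℤ) (1 : F)) (Set.range fun a : F => (single (0 : ℤ) a : LaurentSeries F))) ?_ ?_
    · rintro s (rfl | ⟨a, rfl⟩)
      · refine ⟨Polynomial.X ^ e - Polynomial.C (θ (single 1 1)),
          Polynomial.separable_X_pow_sub_C _ ?_ ?_, ?_⟩
        · intro h
          apply hek
          apply (algebraMap k K).injective
          rw [map_natCast, h, map_zero]
        · simp
        · rw [Polynomial.eval₂_sub, Polynomial.eval₂_X_pow, Polynomial.eval₂_C, hspow]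
          simp
      · refine ⟨Polynomial.X ^ Nat.card F - Polynomial.X, galois_poly_separable p _ ?_, ?_⟩
        · have hcF : CharP F p := charP_of_injective_algebraMap (algebraMap k F).injective p
          have := Fintype.ofFinite F
          rw [← CharP.cast_eq_zero_iff F p, Nat.card_eq_fintype_card, FiniteField.cast_card_eq_zero]
        · rw [Polynomial.eval₂_sub, Polynomial.eval₂_X_pow, Polynomial.eval₂_X, sub_eq_zero]
          exact (f2lem (HahnSeries.C (Γ := ℤ) (R := F)) _).1 ⟨a, rfl⟩
    · intro T h1 h2 x
      refine lau_gen (k := k) e he T ?_ (fun a => h2 (Set.mem_insert_of_mem _ ⟨a, rfl⟩))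
        (h2 (Set.mem_insert _ _)) x
      intro y
      have := h1 (θ y)
      simpa using this
  have hψ' : ∀ y, ψ (ex y) = algebraMap K Ω (θ y) := by
    intro y
    rw [← hψ, RingEquiv.symm_apply_apply]
  let ψC : F →+* Ω := ψ.comp (HahnSeries.C (Γ := ℤ) (R := F))
  have hψC : ∀ a, ψC a = ψ (single 0 a) := fun _ => rfl
  have hFr : ∀ x, x ∈ F ↔ ∃ a, ψC a = x := by
    intro x
    rw [f2lem ψC, ← f2lem (algebraMap F Ω)]
    constructor
    · intro h; exact ⟨⟨x, h⟩, rfl⟩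
    · rintro ⟨a, rfl⟩; exact a.2
  let ι : F' →+* F := (IntermediateField.inclusion hF'F : F' →+* F)
  have hF'r : ∀ x, x ∈ F' ↔ ∃ a, ψC (ι a) = x := by
    intro x
    have h1 := f2lem (ψC.comp ι) x
    simp only [RingHom.comp_apply] at h1
    rw [h1, ← f2lem (algebraMap F' Ω)]
    constructor
    · intro h; exact ⟨⟨x, h⟩, rfl⟩
    · rintro ⟨a, rfl⟩; exact a.2
  have hsub : ∀ x, ψ x ∈ Ln := by
    intro x
    refine lau_gen (k := k) e he (Ln.toSubring.comap ψ) ?_ ?_ ?_ x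
    · intro y
      change ψ (ex y) ∈ Ln
      rw [hψ']
      exact Ln.algebraMap_mem _
    · intro a
      exact hFLn ((hFr _).2 ⟨a, rfl⟩)
    · apply hrad
      rw [← map_pow, hspow, hψ']
      exact Kn.algebraMap_mem _
  -- `Kn` in the image of `F'((t))`
  let N : IntermediateField K Ω := (ψ.comp (lauExp ι e he)).fieldRange.toIntermediateField (by
    intro r
    refine ⟨lauTwist (algebraMap k F') 1 (θ.symm r), ?_⟩
    rw [RingHom.comp_apply, ← lauExp_comp]
    exact hψ r)
  have hKnN : Kn ≤ N := by
    rw [hKn]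
    refine IntermediateField.adjoin_le_iff.2 ?_
    intro z hz
    rw [Set.mem_singleton_iff] at hz
    rw [hz]
    obtain ⟨a, ha⟩ := (hF'r ζ).1 hζF'
    refine ⟨single 0 a, ?_⟩
    rw [RingHom.comp_apply, lauExp_single, mul_zero]
    exact ha
  let M : IntermediateField K Ω := ψ.fieldRange.toIntermediateField (fun r => ⟨_, hψ r⟩)
  have hNM : N ≤ M := by
    rintro _ ⟨y, rfl⟩
    exact ⟨lauExp ι e he y, rfl⟩
  have hradM : ∀ x : Ω, x ^ e ∈ Kn → x ∈ M := by
    intro x hx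
    by_cases hx0 : x = 0
    · rw [hx0]; exact M.zero_mem
    obtain ⟨Y, hY⟩ := hKnN hx
    have hY0 : Y ≠ 0 := by
      rintro rfl
      rw [map_zero] at hY
      exact pow_ne_zero e hx0 hY.symm
    obtain ⟨a, c, v, hv⟩ := f3lem e (by
      intro h
      apply hek
      apply (algebraMap k F').injective
      rw [map_natCast, h, map_zero]) Y hY0
    let u : LaurentSeries F := single a 1 * lauExp ι e he v
    have hu : ψC (ι c) * ψ u ^ e = x ^ e := by
      have h5 : lauExp ι e he (single a c * v ^ e) = single (e * a) (ι c) * (lauExp ι e he v) ^ e := by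
        rw [map_mul, map_pow, lauExp_single]
      rw [← hY, hv]
      change ψ (single 0 (ι c)) * ψ u ^ e = ψ (lauExp ι e he (single a c * v ^ e))
      rw [h5, ← map_pow, ← map_mul]
      congr 1
      simp only [u]
      rw [mul_pow, single_pow, ← mul_assoc, single_mul_single]
      simp
    have hu0 : ψ u ≠ 0 := by
      intro h
      rw [h, zero_pow he.ne', mul_zero] at hu
      exact pow_ne_zero e hx0 hu.symm
    have hw : x / ψ u ∈ F := by
      apply hSFF
      rw [div_pow, ← hu, mul_div_cancel_right₀ _ (pow_ne_zero e hu0)]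
      exact (hF'r _).2 ⟨c, rfl⟩
    obtain ⟨b, hb⟩ := (hFr _).1 hw
    refine ⟨single 0 b * u, ?_⟩
    rw [map_mul, ← hψC, hb, div_mul_cancel₀ _ hu0]
  have hLnM : Ln ≤ M := by
    rw [hLn]
    exact sup_le (hKnN.trans hNM) (IntermediateField.adjoin_le_iff.2 hradM)
  let Ψ : LaurentSeries F →+* Ln := ψ.codRestrict Ln hsub
  have hΨ : ∀ x, ((Ψ x : Ln) : Ω) = ψ x := fun _ => rfl
  have hΨb : Function.Bijective Ψ := by
    refine ⟨Ψ.injective, ?_⟩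
    intro x
    obtain ⟨y, hy⟩ := hLnM x.2
    exact ⟨y, Subtype.ext hy⟩
  refine ⟨F, inferInstance, hFfin, inferInstance, ⟨ζ, hζF⟩, (RingEquiv.ofBijective Ψ hΨb).symm, ?_, ?_⟩
  · exact IsPrimitiveRoot.of_map_of_injective (f := algebraMap F Ω) hζ (algebraMap F Ω).injective
  · intro y
    rw [RingEquiv.symm_apply_eq]
    apply Subtype.ext
    exact (hψ' y).symm

end

/-- Let `K = 𝔽_q((t))` with `q = p ^ f` (formalised as a field isomorphic, as a ring, to
the field of formal Laurent series over the Galois field with `p ^ f` elements), `Ω` a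
separable closure of `K`, and `L_n`, `G_n` as usual.  Writing `℘(x) = x ^ p - x`, there
is an isomorphism of `𝔽_p[G_n]`-modules `L_n / ℘(L_n) ≃ 𝔽_p ⊕ 𝔽_p[G_n]^{(ℕ)}`: an
isomorphism of additive groups commuting with the `G_n`-actions — the Galois action on
the left, and on the right the trivial action on `𝔽_p` together with left multiplication
on each copy of the group algebra `𝔽_p[G_n]` in the countable direct sum. -/
theorem stmt_19 (p f : ℕ) [hp : Fact p.Prime] (hf : 1 ≤ f)
    (K : Type) [Field K] (hK : Nonempty (K ≃+* LaurentSeries (GaloisField p f)))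
    (Ω : Type) [Field Ω] [Algebra K Ω] [IsSepClosure K Ω]
    (n : ℕ) (hn : 1 ≤ n)
    (ζ : Ω) (hζ : IsPrimitiveRoot ζ (p ^ n - 1))
    (Kn : IntermediateField K Ω) (hKn : Kn = IntermediateField.adjoin K {ζ})
    (Ln : IntermediateField K Ω)
    (hLn : Ln = Kn ⊔ IntermediateField.adjoin K {x : Ω | x ^ (p ^ n - 1) ∈ Kn})
    (W : AddSubgroup ↥Ln)
    (hW : W = AddSubgroup.closure (Set.range fun x : ↥Ln => x ^ p - x)) :
    ∃ e : (↥Ln ⧸ W) ≃+ (ZMod p × (ℕ →₀ MonoidAlgebra (ZMod p) (↥Ln ≃ₐ[K] ↥Ln))),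
      ∀ (σ : ↥Ln ≃ₐ[K] ↥Ln) (x : ↥Ln),
        (e (QuotientAddGroup.mk (σ x))).1 = (e (QuotientAddGroup.mk x)).1 ∧
        ∀ i : ℕ,
          (e (QuotientAddGroup.mk (σ x))).2 i =
            MonoidAlgebra.single σ (1 : ZMod p) * (e (QuotientAddGroup.mk x)).2 i := by
  obtain ⟨θ⟩ := hK
  have hp0 := hp.out.pos
  have hlt : 1 < p ^ n := Nat.one_lt_pow (by omega) hp.out.one_lt
  have he : 0 < p ^ n - 1 := by omega
  have hpe : Nat.Coprime p (p ^ n - 1) := by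
    rw [hp.out.coprime_iff_not_dvd]
    intro h
    have h1 : p ∣ p ^ n := dvd_pow_self p (by omega)
    have h2 := Nat.dvd_sub h1 h
    rw [show p ^ n - (p ^ n - 1) = 1 by omega] at h2
    exact hp.out.one_lt.ne' (Nat.dvd_one.1 h2)
  have hek : ((p ^ n - 1 : ℕ) : GaloisField p f) ≠ 0 := by
    intro h
    rw [CharP.cast_eq_zero_iff (GaloisField p f) p] at h
    exact (hp.out.coprime_iff_not_dvd.1 hpe) h
  obtain ⟨F, _, _, _, ζ', Φ, hζ', hΦ⟩ :=
    f4lem p (p ^ n - 1) he hek θ.symm ζ hζ Kn hKn Ln hLn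
  exact elem p (p ^ n - 1) he hpe ζ' hζ' θ.symm Φ hΦ W hW
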